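/- arXiv:2307.01625 — 3 statements merged into one kernel-verified Lean document; each statement's English description precedes it below -/
import Mathlib

section
/- Let k ≥ 1 and M with 0 ≤ M ≤ k be integers. Then a_{k,M}(2,0) = (−1)^{k(k−1)/2} Σ_{l₁=0}^{M} Σ_{l₂=0}^{M} Σ_{t=0}^{2l₁} Σ_{h₁₀+h₁₁+⋯+h₁ₖ = 2l₂+t} Σ_{h₂₁+⋯+h₂ₖ = 2M−(l₁+l₂)} C(M,l₁)·C(M,l₂)·C(2l₁,t)·C(2l₂+t; h₁₀,h₁₁,…,h₁ₖ)·C(2M−l₁−l₂; h₂₁,…,h₂ₖ)·(−1)^{h₁₀}·( ∏_{i=1}^{k} 1/(2k + h₁ᵢ + 2h₂ᵢ − i)! )·∏_{1≤i<j≤k}( h₁ⱼ + 2h₂ⱼ − h₁ᵢ − 2h₂ᵢ − j + i ), the sums being over nonnegative integers h₁₀,h₁₁,…,h₁ₖ with sum 2l₂+t and h₂₁,…,h₂ₖ with sum 2M−(l₁+l₂). -/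
open MeasureTheory Finset

noncomputable section

/-- `besselFactor m x = ∑_{j≥0} x^j/(j!·(m+j)!)`, so that for `x ≥ 0` one has
`I_m(2√x) = x^{m/2} · besselFactor m x`, where `I_m` is the modified Bessel function of the
first kind. -/
def besselFactor (m : ℕ) (x : ℝ) : ℝ := ∑' j : ℕ, x ^ j / (j.factorial * (m + j).factorial)

/-- The coefficient `a_{k,M}(2,0)`.  Here
`e^{-x} · det_{k×k}(besselFactor (2hᵢ+i+j-1) x)` is exactly the analytic extension at `x = 0`
of `e^{-x} · x^{-k²/2-2M+l₁+l₂} · det_{k×k}(I_{2hᵢ+i+j-1}(2√x))`, since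
`I_m(2√x) = x^{m/2}·besselFactor m x` and the determinant of the `x^{m/2}` factors contributes
exactly `x^{k²/2 + Σᵢ hᵢ} = x^{k²/2 + 2M - l₁ - l₂}`. -/
def a20 (k M : ℕ) : ℝ :=
  (-1 : ℝ) ^ (k * (k - 1) / 2) *
    ∑ l₁ ∈ Finset.range (M + 1), ∑ l₂ ∈ Finset.range (M + 1), ∑ t ∈ Finset.range (2 * l₁ + 1),
      ∑ h ∈ (Fintype.piFinset fun _ : Fin k => Finset.range (2 * M + 1)).filter
          (fun h => (∑ i, h i) + l₁ + l₂ = 2 * M),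
        (M.choose l₁ : ℝ) * (M.choose l₂ : ℝ) * ((2 * l₁).choose t : ℝ) *
          (Nat.multinomial Finset.univ h : ℝ) *
          iteratedDeriv (2 * l₂ + t)
            (fun x : ℝ => Real.exp (-x) *
              (Matrix.of fun i j : Fin k =>
                besselFactor (2 * h i + (i : ℕ) + (j : ℕ) + 1) x).det) 0

/-!
Each Bessel factor is entire with Taylor coefficients `1 / (j! (m + j)!)`, so its `n`-th derivative
at `0` is `1 / (m + n)!`. Expanding the determinant over permutations and applying the multinomial
Leibniz rule to `e^{-x}` and the `k` entries of each term shows that differentiation only shifts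
the orders in row `i` by `h₁ᵢ`. What remains at `x = 0` are determinants of inverse factorials.
After reversing rows and columns their entries are `1 / (vᵢ - j)!`; with `1 / vᵢ!` pulled out of
row `i` the entries become falling factorials, monic polynomials of degree `j` in `vᵢ`, and the
determinant is a Vandermonde product. The row reversal is absorbed by reindexing the sum over `h₂`.
-/

section Leibniz

variable {ι 𝕜 A : Type*} [DecidableEq ι] [NontriviallyNormedField 𝕜] [NormedCommRing A]
  [NormedAlgebra 𝕜 A]

lemma sum_piAntidiag_cons {μ M : Type*} [AddCancelCommMonoid μ] [HasAntidiagonal μ]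
    [DecidableEq μ] [AddCommMonoid M] {a : ι} {s : Finset ι} (ha : a ∉ s) (n : μ)
    (g : (ι → μ) → M) :
    ∑ h ∈ piAntidiag (cons a s ha) n, g h =
      ∑ p ∈ antidiagonal n, ∑ h ∈ piAntidiag s p.2, g (Function.update h a p.1) := by
  rw [piAntidiag_cons, sum_disjiUnion]
  refine sum_congr rfl fun p _ => ?_
  rw [sum_map]
  refine sum_congr rfl fun h hh => congrArg g ?_
  have h_a : h a = 0 := by_contra fun hne => ha ((mem_piAntidiag.1 hh).2 a hne)
  ext i
  obtain rfl | hi := eq_or_ne i a <;> simp [*]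

lemma iteratedDeriv_prod (s : Finset ι) {f : ι → 𝕜 → A} {n : ℕ} {x : 𝕜}
    (hf : ∀ i ∈ s, ContDiffAt 𝕜 n (f i) x) :
    iteratedDeriv n (fun y => ∏ i ∈ s, f i y) x =
      ∑ h ∈ piAntidiag s n,
        (Nat.multinomial s h : A) * ∏ i ∈ s, iteratedDeriv (h i) (f i) x := by
  induction s using cons_induction generalizing n with
  | empty => cases n <;> simp [iteratedDeriv_const]
  | cons a s ha ih =>
    rw [forall_mem_cons] at hf
    simp only [prod_cons]
    rw [iteratedDeriv_fun_mul hf.1 (contDiffAt_prod hf.2), sum_piAntidiag_cons,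
      Nat.sum_antidiagonal_eq_sum_range_succ_mk]
    refine sum_congr rfl fun p hp => ?_
    have hpn : p ≤ n := mem_range_succ_iff.1 hp
    rw [ih fun i hi => (hf.2 i hi).of_le (by exact_mod_cast n.sub_le p), mul_sum]
    refine sum_congr rfl fun h hh => ?_
    have h_update : ∀ i ∈ s, Function.update h a p i = h i := fun i hi =>
      Function.update_of_ne (ne_of_mem_of_not_mem hi ha) _ _
    have h_prod : ∏ i ∈ s, iteratedDeriv (Function.update h a p i) (f i) x =
        ∏ i ∈ s, iteratedDeriv (h i) (f i) x :=
      prod_congr rfl fun i hi => by rw [h_update i hi]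
    rw [Nat.multinomial_cons, Nat.multinomial_congr h_update, sum_congr rfl h_update,
      (mem_piAntidiag.1 hh).1, Function.update_self, Nat.add_sub_cancel' hpn,
      h_prod]
    push_cast
    ring

lemma iteratedDeriv_mul_det {k n : ℕ} {g : 𝕜 → A} {f : Fin k → Fin k → 𝕜 → A} {x : 𝕜}
    (hg : ContDiffAt 𝕜 n g x) (hf : ∀ i j, ContDiffAt 𝕜 n (f i j) x) :
    iteratedDeriv n (fun y => g y * (Matrix.of fun i j => f i j y).det) x =
      ∑ h ∈ piAntidiag (univ : Finset (Fin (k + 1))) n,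
        (Nat.multinomial univ h : A) * iteratedDeriv (h 0) g x *
          (Matrix.of fun i j => iteratedDeriv (h i.succ) (f i j) x).det := by
  let F (σ : Equiv.Perm (Fin k)) : Fin (k + 1) → 𝕜 → A := Fin.cons g fun i => f i (σ i)
  have hF (σ) (i : Fin (k + 1)) : ContDiffAt 𝕜 n (F σ i) x :=
    Fin.cases hg (fun i => hf i (σ i)) i
  have h_expand (y : 𝕜) : g y * (Matrix.of fun i j => f i j y).det =
      ∑ σ : Equiv.Perm (Fin k), ((Equiv.Perm.sign σ : ℤ) : A) * ∏ i, F σ i y := by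
    rw [← Matrix.det_transpose, Matrix.det_apply', mul_sum]
    simp only [F, Fin.prod_univ_succ, Fin.cons_zero, Fin.cons_succ, Matrix.transpose_apply,
      Matrix.of_apply, mul_left_comm]
  simp only [h_expand]
  rw [iteratedDeriv_fun_sum fun σ _ => contDiffAt_const.mul (contDiffAt_prod fun i _ => hF σ i)]
  simp only [iteratedDeriv_const_mul _ (contDiffAt_prod fun i _ => hF _ i),
    iteratedDeriv_prod univ fun i _ => hF _ i, mul_sum]
  rw [sum_comm]
  refine sum_congr rfl fun h _ => ?_
  rw [← Matrix.det_transpose, Matrix.det_apply', mul_sum]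
  refine sum_congr rfl fun σ _ => ?_
  simp only [F, Fin.prod_univ_succ, Fin.cons_zero, Fin.cons_succ, Matrix.transpose_apply,
    Matrix.of_apply]
  ring

end Leibniz

lemma iteratedDeriv_eq_factorial_mul_coeff {𝕜 : Type*} [NontriviallyNormedField 𝕜]
    [CompleteSpace 𝕜] [CharZero 𝕜] {f : 𝕜 → 𝕜} {p : FormalMultilinearSeries 𝕜 𝕜 𝕜} {x : 𝕜}
    (hf : HasFPowerSeriesAt f p x) (n : ℕ) :
    iteratedDeriv n f x = n.factorial * p.coeff n := by
  rw [hf.eq_formalMultilinearSeries hf.analyticAt.hasFPowerSeriesAt,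
    FormalMultilinearSeries.coeff_ofScalars, mul_div_cancel₀]
  exact_mod_cast n.factorial_ne_zero

lemma hasFPowerSeriesOnBall_besselFactor (m : ℕ) :
    HasFPowerSeriesOnBall (besselFactor m)
      (.ofScalars ℝ fun j => 1 / (j.factorial * (m + j).factorial : ℝ)) 0 ⊤ := by
  set p : FormalMultilinearSeries ℝ ℝ ℝ :=
    .ofScalars ℝ fun j => 1 / (j.factorial * (m + j).factorial : ℝ) with hp
  have h_radius : p.radius = ⊤ := by
    refine p.radius_eq_top_of_summable_norm fun r =>
      (Real.summable_pow_div_factorial r).of_nonneg_of_le (fun j => by positivity) fun j => ?_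
    have h_factorial : (j.factorial : ℝ) ≤ j.factorial * (m + j).factorial :=
      le_mul_of_one_le_right (by positivity) (by exact_mod_cast (m + j).factorial_pos)
    rw [hp, FormalMultilinearSeries.ofScalars_norm, Real.norm_of_nonneg (by positivity),
      one_div_mul_eq_div]
    gcongr
  have h_sum : p.sum = besselFactor m := by
    ext x
    refine (FormalMultilinearSeries.ofScalars_sum_eq _ x).trans (tsum_congr fun j => ?_)
    rw [smul_eq_mul, one_div_mul_eq_div]
  rw [← h_sum, ← h_radius]
  exact p.hasFPowerSeriesOnBall (by simp [h_radius])

lemma iteratedDeriv_besselFactor_zero (m n : ℕ) :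
    iteratedDeriv n (besselFactor m) 0 = 1 / ((m + n).factorial : ℝ) := by
  rw [iteratedDeriv_eq_factorial_mul_coeff
    (hasFPowerSeriesOnBall_besselFactor m).hasFPowerSeriesAt,
    FormalMultilinearSeries.coeff_ofScalars]
  field_simp

lemma iteratedDeriv_exp_neg_zero (n : ℕ) :
    iteratedDeriv n (fun x : ℝ => Real.exp (-x)) 0 = (-1) ^ n := by
  simpa using congrFun (iteratedDeriv_exp_const_mul n (-1)) 0

lemma iteratedDeriv_exp_neg_mul_det_besselFactor {k : ℕ} (n : ℕ) (m : Fin k → Fin k → ℕ) :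
    iteratedDeriv n
        (fun x => Real.exp (-x) * (Matrix.of fun i j => besselFactor (m i j) x).det) 0 =
      ∑ h ∈ piAntidiag (univ : Finset (Fin (k + 1))) n,
        (Nat.multinomial univ h : ℝ) * (-1) ^ h 0 *
          (Matrix.of fun i j => 1 / ((m i j + h i.succ).factorial : ℝ)).det := by
  rw [iteratedDeriv_mul_det (by fun_prop)
    fun i j => (hasFPowerSeriesOnBall_besselFactor (m i j)).analyticAt.contDiffAt]
  simp only [iteratedDeriv_exp_neg_zero, iteratedDeriv_besselFactor_zero]

section Determinant

variable {K : Type*} [Field K] [CharZero K] {k : ℕ}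

lemma det_inv_factorial_sub {v : Fin k → ℕ} (hv : ∀ i j : Fin k, (j : ℕ) ≤ v i) :
    (Matrix.of fun i j : Fin k => 1 / ((v i - j).factorial : K)).det =
      (∏ i, 1 / ((v i).factorial : K)) * ∏ i, ∏ j ∈ Ioi i, ((v j : K) - v i) := by
  rw [← Matrix.det_vandermonde (fun i => (v i : K)),
    Matrix.det_eval_matrixOfPolynomials_eq_det_vandermonde _ (fun j => descPochhammer K j)
      (fun j => descPochhammer_natDegree K j) (fun j => monic_descPochhammer K j),
    ← Matrix.det_mul_column]
  congr 1
  ext i j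
  have h_desc : ((v i).factorial : K) = (v i - j).factorial * (v i).descFactorial j := by
    exact_mod_cast (Nat.factorial_mul_descFactorial (hv i j)).symm
  have h_ne : ((v i).factorial : K) ≠ 0 := by exact_mod_cast (v i).factorial_ne_zero
  have h_sub_ne : ((v i - j).factorial : K) ≠ 0 := by
    exact_mod_cast (v i - j).factorial_ne_zero
  rw [Matrix.of_apply, Matrix.of_apply, Matrix.of_apply, descPochhammer_eval_eq_descFactorial,
    one_div_mul_eq_div, div_eq_div_iff h_sub_ne h_ne, one_mul, h_desc, mul_comm]

lemma det_inv_factorial_add_rev (a : Fin k → ℕ) :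
    (Matrix.of fun i j : Fin k => 1 / ((a i + i.rev + j.rev + 1).factorial : K)).det =
      (∏ i, 1 / ((2 * k + a i - (i + 1)).factorial : K)) *
        ∏ p : Fin k × Fin k with p.1 < p.2,
          (((a p.2 : ℤ) - a p.1 - (p.2 : ℕ) + (p.1 : ℕ) : ℤ) : K) := by
  have h_entry (i j : Fin k) : a i + i.rev + j.rev + 1 = 2 * k + a i - (i + 1) - j := by
    grind
  have h_diff (i j : Fin k) : ((2 * k + a j - (j + 1) : ℕ) : K) - (2 * k + a i - (i + 1) : ℕ) =
      (((a j : ℤ) - a i - (j : ℕ) + (i : ℕ) : ℤ) : K) := by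
    rw [Nat.cast_sub (by lia), Nat.cast_sub (by lia)]
    push_cast
    ring
  simp only [h_entry]
  rw [det_inv_factorial_sub fun i j => by lia]
  simp only [h_diff]
  exact congrArg _ (prod_finset_product' _ univ Ioi (by simp)).symm

end Determinant

section Reindexing

variable {ι : Type*} [Fintype ι]

lemma multinomial_univ_comp_equiv {κ : Type*} [Fintype κ] (e : ι ≃ κ) (h : κ → ℕ) :
    Nat.multinomial univ (h ∘ e) = Nat.multinomial univ h := by
  simp only [Nat.multinomial, Function.comp_apply, e.sum_comp h,
    e.prod_comp fun i => (h i).factorial]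

variable [DecidableEq ι]

lemma filter_piFinset_range_eq_piAntidiag (n : ℕ) :
    ((Fintype.piFinset fun _ : ι => range (n + 1)).filter fun h => ∑ i, h i = n) =
      piAntidiag univ n := by
  ext h
  have h_le : ∑ i, h i = n → ∀ i, h i ≤ n := fun hn i =>
    (single_le_sum_of_canonicallyOrdered (mem_univ i)).trans_eq hn
  simpa using h_le

lemma sum_filter_piFinset_comp_perm {μ M : Type*} [AddCommMonoid M] (e : Equiv.Perm ι)
    (s : Finset μ) {P : (ι → μ) → Prop} [DecidablePred P] (hP : ∀ h, P (h ∘ e) ↔ P h)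
    (f : (ι → μ) → M) :
    ∑ h ∈ Fintype.piFinset (fun _ => s) with P h, f (h ∘ e) =
      ∑ h ∈ Fintype.piFinset (fun _ => s) with P h, f h :=
  sum_equiv (e.symm.arrowCongr (Equiv.refl μ))
    (fun h => by
      rw [mem_filter, mem_filter, Fintype.mem_piFinset, Fintype.mem_piFinset]
      exact and_congr e.forall_congr_right.symm (hP h).symm)
    fun _ _ => rfl

end Reindexing

lemma iteratedDeriv_exp_neg_mul_det_besselFactor_rev {k : ℕ} (n : ℕ) (m : Fin k → ℕ) :
    iteratedDeriv n (fun x => Real.exp (-x) *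
        (Matrix.of fun i j : Fin k => besselFactor (m i.rev + i + j + 1) x).det) 0 =
      ∑ h ∈ piAntidiag (univ : Finset (Fin (k + 1))) n,
        (Nat.multinomial univ h : ℝ) * (-1) ^ h 0 *
          ((∏ i, 1 / ((2 * k + (h i.succ + m i) - (i + 1)).factorial : ℝ)) *
            ∏ p : Fin k × Fin k with p.1 < p.2,
              ((((h p.2.succ + m p.2 : ℕ) : ℤ) - (h p.1.succ + m p.1 : ℕ)
                - (p.2 : ℕ) + (p.1 : ℕ) : ℤ) : ℝ)) := by
  have h_rev (x : ℝ) :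
      (Matrix.of fun i j : Fin k => besselFactor (m i.rev + i + j + 1) x).det =
        (Matrix.of fun i j : Fin k => besselFactor (m i + i.rev + j.rev + 1) x).det := by
    rw [← Matrix.det_submatrix_equiv_self Fin.revPerm]
    congr 1
    ext i j
    simp
  have h_entry (h : Fin (k + 1) → ℕ) (i j : Fin k) :
      m i + i.rev + j.rev + 1 + h i.succ = h i.succ + m i + i.rev + j.rev + 1 := by ring
  simp only [h_rev, iteratedDeriv_exp_neg_mul_det_besselFactor, h_entry,
    det_inv_factorial_add_rev fun i => _ + m i]

theorem a20_explicit_general (k M : ℕ) :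
    a20 k M =
      (-1 : ℝ) ^ (k * (k - 1) / 2) *
        ∑ l₁ ∈ Finset.range (M + 1), ∑ l₂ ∈ Finset.range (M + 1), ∑ t ∈ Finset.range (2 * l₁ + 1),
          ∑ h₁ ∈ (Fintype.piFinset fun _ : Fin (k + 1) => Finset.range (2 * l₂ + t + 1)).filter
              (fun h₁ => ∑ i, h₁ i = 2 * l₂ + t),
            ∑ h₂ ∈ (Fintype.piFinset fun _ : Fin k => Finset.range (2 * M + 1)).filter
                (fun h₂ => (∑ i, h₂ i) + l₁ + l₂ = 2 * M),
              (M.choose l₁ : ℝ) * (M.choose l₂ : ℝ) * ((2 * l₁).choose t : ℝ) *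
                (Nat.multinomial Finset.univ h₁ : ℝ) * (Nat.multinomial Finset.univ h₂ : ℝ) *
                (-1 : ℝ) ^ (h₁ 0) *
                (∏ i : Fin k,
                  (1 : ℝ) / ((2 * k + h₁ i.succ + 2 * h₂ i - ((i : ℕ) + 1)).factorial : ℝ)) *
                ∏ p ∈ Finset.univ.filter (fun p : Fin k × Fin k => p.1 < p.2),
                  ((((h₁ p.2.succ : ℤ) + 2 * (h₂ p.2 : ℤ) - (h₁ p.1.succ : ℤ) - 2 * (h₂ p.1 : ℤ)
                      - ((p.2 : ℕ) : ℤ) + ((p.1 : ℕ) : ℤ)) : ℤ) : ℝ) := by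
  rw [a20]
  congr 1
  refine sum_congr rfl fun l₁ _ => sum_congr rfl fun l₂ _ => sum_congr rfl fun t _ => ?_
  have h_sum_rev (h : Fin k → ℕ) : ∑ i, (h ∘ Fin.revPerm) i = ∑ i, h i :=
    Equiv.sum_comp Fin.revPerm h
  rw [sum_comm, ← sum_filter_piFinset_comp_perm Fin.revPerm _ fun h => by rw [h_sum_rev]]
  refine sum_congr rfl fun h₂ _ => ?_
  rw [multinomial_univ_comp_equiv, filter_piFinset_range_eq_piAntidiag]
  simp only [Function.comp_apply, Fin.revPerm_apply]
  rw [iteratedDeriv_exp_neg_mul_det_besselFactor_rev _ fun i => 2 * h₂ i, mul_sum]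
  refine sum_congr rfl fun h₁ _ => ?_
  simp only [← add_assoc]
  push_cast
  simp only [sub_add_eq_sub_sub]
  ring

/-- **Theorem (explicit combinatorial formula for `a_{k,M}(2,0)`).**
In the products below, `i,j` run over `1,…,k` (realised as `Fin k`, the `1`-based index
being `i+1`); `h₁` is indexed by `0,1,…,k` (realised as `Fin (k+1)`, with `h₁ᵢ = h₁ i.succ`
for `i = 1,…,k`) and `h₂` by `1,…,k`.  Note `−j+i` (1-based) equals `−(p.2) + p.1`
(0-based). -/
theorem a20_explicit (k M : ℕ) (hk : 1 ≤ k) (hM : M ≤ k) :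
    a20 k M =
      (-1 : ℝ) ^ (k * (k - 1) / 2) *
        ∑ l₁ ∈ Finset.range (M + 1), ∑ l₂ ∈ Finset.range (M + 1), ∑ t ∈ Finset.range (2 * l₁ + 1),
          ∑ h₁ ∈ (Fintype.piFinset fun _ : Fin (k + 1) => Finset.range (2 * l₂ + t + 1)).filter
              (fun h₁ => ∑ i, h₁ i = 2 * l₂ + t),
            ∑ h₂ ∈ (Fintype.piFinset fun _ : Fin k => Finset.range (2 * M + 1)).filter
                (fun h₂ => (∑ i, h₂ i) + l₁ + l₂ = 2 * M),
              (M.choose l₁ : ℝ) * (M.choose l₂ : ℝ) * ((2 * l₁).choose t : ℝ) *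
                (Nat.multinomial Finset.univ h₁ : ℝ) * (Nat.multinomial Finset.univ h₂ : ℝ) *
                (-1 : ℝ) ^ (h₁ 0) *
                (∏ i : Fin k,
                  (1 : ℝ) / ((2 * k + h₁ i.succ + 2 * h₂ i - ((i : ℕ) + 1)).factorial : ℝ)) *
                ∏ p ∈ Finset.univ.filter (fun p : Fin k × Fin k => p.1 < p.2),
                  ((((h₁ p.2.succ : ℤ) + 2 * (h₂ p.2 : ℤ) - (h₁ p.1.succ : ℤ) - 2 * (h₂ p.1 : ℤ)
                      - ((p.2 : ℕ) : ℤ) + ((p.1 : ℕ) : ℤ)) : ℤ) : ℝ) :=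
  a20_explicit_general k M
end
end

section
/- Let n ≥ 0 and k ≥ 1 be integers, let N be a complex number, and let w₁,…,w_k be complex numbers. Then for every complex α with α ≠ w_i for all i, the n-th derivative with respect to α satisfies (d/dα)^{n} [ e^{−Nα/2} / ∏_{i=1}^{k}(w_i − α) ] = [ e^{−Nα/2} / ∏_{i=1}^{k}(w_i − α) ] · Σ_{m₁+2m₂+⋯+n·mₙ = n} n!/(m₁!⋯mₙ!) · ( −N/2 + Σ_{l=1}^{k} 1/(w_l − α) )^{m₁} · ∏_{j=2}^{n} ( (1/j)·Σ_{l=1}^{k} 1/(w_l − α)^{j} )^{m_j}, the sum being over all tuples (m₁,…,mₙ) of nonnegative integers with m₁+2m₂+⋯+n·mₙ = n. -/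
open Finset

noncomputable section

/-!
If `f' = g f`, i.e. `g` is the logarithmic derivative of `f`, the Leibniz rule determines the Taylor
coefficients of `f` from those of `g` recursively. With `j! xⱼ₋₁` in place of `g⁽ʲ⁻¹⁾`, the
coefficients of `exp (∑ xⱼ₋₁ tʲ) = ∏ exp (xⱼ₋₁ tʲ)` satisfy the same recursion, and multiplying out
the exponential series writes them as sums over the tuples `m` with `∑ j mⱼ = n`. For the function
at hand `g` is a constant plus a sum of simple poles, whose derivatives are explicit.
-/

open scoped Nat Topology

section WeightedTuples

variable {ι K : Type*} [Fintype ι] [DecidableEq ι] [Field K]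

/-- The tuples `m : ι → ℕ` of weighted degree `∑ i, w i * m i = d`. The bound `m i ≤ d` makes this
a finite set; it excludes nothing as long as all weights are positive. -/
def weightedTuples (w : ι → ℕ) (d : ℕ) : Finset (ι → ℕ) :=
  (Fintype.piFinset fun _ => range (d + 1)).filter fun m => ∑ i, w i * m i = d

/-- The coefficient of `t ^ d` in the formal series `exp (∑ i, x i * t ^ w i)`, obtained by
expanding `∏ i, exp (x i * t ^ w i)`; the weights `w i` are meant to be positive. -/
def weightedExpCoeff (w : ι → ℕ) (x : ι → K) (d : ℕ) : K :=
  ∑ m ∈ weightedTuples w d, ∏ i, x i ^ m i / (m i)!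

lemma mem_weightedTuples {w : ι → ℕ} (hw : ∀ i, 0 < w i) {d : ℕ} {m : ι → ℕ} :
    m ∈ weightedTuples w d ↔ ∑ i, w i * m i = d := by
  simp only [weightedTuples, mem_filter, Fintype.mem_piFinset, mem_range, Nat.lt_succ_iff,
    and_iff_right_iff_imp]
  rintro rfl i
  calc m i ≤ w i * m i := Nat.le_mul_of_pos_left _ (hw i)
    _ ≤ ∑ i, w i * m i := single_le_sum_of_canonicallyOrdered (f := fun i => w i * m i) (mem_univ i)

lemma weightedExpCoeff_zero {w : ι → ℕ} (hw : ∀ i, 0 < w i) (x : ι → K) :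
    weightedExpCoeff w x 0 = 1 := by
  have h_tuples : weightedTuples w 0 = {0} := by
    ext m
    simp [mem_weightedTuples hw, funext_iff, (hw _).ne']
  simp [weightedExpCoeff, h_tuples]

lemma sum_weights_add_single (w m : ι → ℕ) (i : ι) :
    ∑ j, w j * (m + Pi.single i 1 : ι → ℕ) j = ∑ j, w j * m j + w i := by
  simp [mul_add, sum_add_distrib, Pi.single_apply]

variable [CharZero K]

lemma mul_prod_pow_div_factorial_add_single (x : ι → K) (m : ι → ℕ) (i : ι) :
    ((m + Pi.single i 1 : ι → ℕ) i : K) *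
        ∏ j, x j ^ (m + Pi.single i 1 : ι → ℕ) j / ((m + Pi.single i 1 : ι → ℕ) j)! =
      x i * ∏ j, x j ^ m j / (m j)! := by
  have h_others :
      ∏ j ∈ univ.erase i, x j ^ (m + Pi.single i 1 : ι → ℕ) j /
          ((m + Pi.single i 1 : ι → ℕ) j)! =
      ∏ j ∈ univ.erase i, x j ^ m j / ((m j)! : K) :=
    prod_congr rfl fun j hj => by simp [Pi.single_eq_of_ne (ne_of_mem_erase hj)]
  rw [← mul_prod_erase univ _ (mem_univ i), h_others, ← mul_prod_erase univ _ (mem_univ i)]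
  have h_fact : ((m i)! : K) ≠ 0 := Nat.cast_ne_zero.2 (Nat.factorial_ne_zero _)
  have h_succ : (m i : K) + 1 ≠ 0 := Nat.cast_add_one_ne_zero _
  simp only [Pi.add_apply, Pi.single_eq_same, Nat.factorial_succ]
  push_cast
  field_simp
  ring

-- Coefficientwise form of `y ∂/∂y exp (y tʷ) = y tʷ exp (y tʷ)` at `y = xᵢ`, `w = wᵢ`.
lemma sum_weightedTuples_mul_prod {w : ι → ℕ} (hw : ∀ i, 0 < w i) (x : ι → K) (i : ι) (d : ℕ) :
    ∑ m ∈ weightedTuples w d, (m i : K) * ∏ j, x j ^ m j / (m j)! =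
      if w i ≤ d then x i * weightedExpCoeff w x (d - w i) else 0 := by
  split_ifs with hd
  · rw [weightedExpCoeff, mul_sum]
    symm
    refine sum_of_injOn (· + Pi.single i 1) (add_left_injective _).injOn ?_ ?_
      fun m _ => (mul_prod_pow_div_factorial_add_single x m i).symm
    · intro m hm
      rw [mem_coe, mem_weightedTuples hw] at hm ⊢
      rw [sum_weights_add_single, hm, Nat.sub_add_cancel hd]
    · intro m hm h_image
      suffices m i = 0 by simp [this]
      by_contra hmi
      have h_le : Pi.single i 1 ≤ m := fun j => by
        rcases eq_or_ne j i with rfl | hj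
        · simpa only [Pi.single_eq_same, Nat.one_le_iff_ne_zero] using hmi
        · simp [hj]
      have h_split : m - Pi.single i 1 + Pi.single i 1 = m := tsub_add_cancel_of_le h_le
      refine h_image ⟨m - Pi.single i 1, ?_, h_split⟩
      rw [mem_weightedTuples hw, ← h_split, sum_weights_add_single] at hm
      rw [mem_coe, mem_weightedTuples hw]
      exact Nat.eq_sub_of_add_eq hm
  · refine sum_eq_zero fun m hm => ?_
    suffices m i = 0 by simp [this]
    by_contra hmi
    refine hd ?_
    calc w i ≤ w i * m i := Nat.le_mul_of_pos_right _ (Nat.pos_of_ne_zero hmi)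
      _ ≤ ∑ j, w j * m j :=
        single_le_sum_of_canonicallyOrdered (f := fun j => w j * m j) (mem_univ i)
      _ = d := (mem_weightedTuples hw).1 hm

lemma mul_weightedExpCoeff {w : ι → ℕ} (hw : ∀ i, 0 < w i) (x : ι → K) (d : ℕ) :
    d * weightedExpCoeff w x d =
      ∑ i, if w i ≤ d then w i * x i * weightedExpCoeff w x (d - w i) else 0 := by
  calc d * weightedExpCoeff w x d
      = ∑ m ∈ weightedTuples w d, ∑ i, w i * (m i * ∏ j, x j ^ m j / ((m j)! : K)) := by
        rw [weightedExpCoeff, mul_sum]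
        refine sum_congr rfl fun m hm => ?_
        conv_lhs => rw [← (mem_weightedTuples hw).1 hm]
        push_cast
        simp only [sum_mul, mul_assoc]
    _ = ∑ i, w i * ∑ m ∈ weightedTuples w d, m i * ∏ j, x j ^ m j / ((m j)! : K) := by
        rw [sum_comm]
        simp only [mul_sum]
    _ = _ := by
        simp only [sum_weightedTuples_mul_prod hw, mul_ite, mul_zero, mul_assoc]

lemma succ_mul_weightedExpCoeff_succ {n l : ℕ} (hl : l < n) (x : ℕ → K) :
    (l + 1 : K) * weightedExpCoeff (fun j : Fin n => (j : ℕ) + 1) (fun j => x j) (l + 1) =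
      ∑ i ∈ range (l + 1),
        (i + 1) * x i * weightedExpCoeff (fun j : Fin n => (j : ℕ) + 1) (fun j => x j) (l - i) := by
  have h_rec := mul_weightedExpCoeff (fun j : Fin n => Nat.succ_pos j) (fun j => x j) (l + 1)
  have h_filter : (range n).filter (· ≤ l) = range (l + 1) := by
    ext i
    simp only [mem_filter, mem_range]
    omega
  push_cast [Nat.add_sub_add_right, Nat.add_le_add_iff_right] at h_rec
  rw [h_rec, Fin.sum_univ_eq_sum_range (fun i => if i ≤ l then (i + 1) * x i *
    weightedExpCoeff (fun j : Fin n => (j : ℕ) + 1) (fun j => x j) (l - i) else 0),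
    ← sum_filter, h_filter]

lemma eq_mul_factorial_mul_weightedExpCoeff {n : ℕ} {a x : ℕ → K}
    (ha : ∀ l < n, a (l + 1) =
      ∑ i ∈ range (l + 1), l.choose i * ((i + 1)! * x i) * a (l - i)) {l : ℕ} (hl : l ≤ n) :
    a l = a 0 * (l ! * weightedExpCoeff (fun j : Fin n => (j : ℕ) + 1) (fun j => x j) l) := by
  induction l using Nat.strong_induction_on with
  | _ l ih =>
    rcases l with _ | l
    · simp [weightedExpCoeff_zero]
    · rw [Nat.factorial_succ, mul_comm (l + 1) l !, Nat.cast_mul, mul_assoc (l ! : K),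
        Nat.cast_succ, succ_mul_weightedExpCoeff_succ hl, ha l hl, mul_sum, mul_sum]
      refine sum_congr rfl fun i hi => ?_
      have hil : i ≤ l := Nat.lt_succ_iff.1 (mem_range.1 hi)
      rw [ih (l - i) (by omega) (by omega), ← Nat.choose_mul_factorial_mul_factorial hil,
        Nat.factorial_succ]
      push_cast
      ring

end WeightedTuples

section LogDeriv

variable {𝕜 𝕜' : Type*} [NontriviallyNormedField 𝕜] [NontriviallyNormedField 𝕜']
  [NormedAlgebra 𝕜 𝕜']

lemma iteratedDeriv_succ_eq_sum_logDeriv {f : 𝕜 → 𝕜'} {x : 𝕜} {l : ℕ}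
    (hf : ContDiffAt 𝕜 (l + 1) f x) (hfx : f x ≠ 0) :
    iteratedDeriv (l + 1) f x = ∑ i ∈ range (l + 1),
      l.choose i * iteratedDeriv i (logDeriv f) x * iteratedDeriv (l - i) f x := by
  have hf_l : ContDiffAt 𝕜 l f x := hf.of_le (by simp)
  have h_log : ContDiffAt 𝕜 l (logDeriv f) x := by
    rw [logDeriv, div_eq_mul_inv]
    exact (hf.derivWithin le_rfl).mul (hf_l.inv hfx)
  have h_deriv : deriv f =ᶠ[𝓝 x] logDeriv f * f := by
    filter_upwards [hf.continuousAt.eventually_ne hfx] with z hz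
    exact (div_mul_cancel₀ _ hz).symm
  rw [iteratedDeriv_succ', h_deriv.iteratedDeriv_eq, iteratedDeriv_mul h_log hf_l]

theorem iteratedDeriv_eq_mul_sum_logDeriv [CharZero 𝕜'] {f : 𝕜 → 𝕜'} {x : 𝕜} {n : ℕ}
    (hf : ContDiffAt 𝕜 n f x) (hfx : f x ≠ 0) :
    iteratedDeriv n f x = f x * ∑ m ∈ weightedTuples (fun j : Fin n => (j : ℕ) + 1) n,
      (n ! / ∏ j, ((m j)! : 𝕜')) *
        ∏ j : Fin n, (iteratedDeriv j (logDeriv f) x / ((j : ℕ) + 1)!) ^ m j := by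
  have h_rec : ∀ l < n, iteratedDeriv (l + 1) f x = ∑ i ∈ range (l + 1), l.choose i *
      ((i + 1)! * (iteratedDeriv i (logDeriv f) x / (i + 1)!)) * iteratedDeriv (l - i) f x := by
    intro l hl
    rw [iteratedDeriv_succ_eq_sum_logDeriv (hf.of_le (mod_cast hl)) hfx]
    refine sum_congr rfl fun i _ => ?_
    rw [mul_div_cancel₀ _ (Nat.cast_ne_zero.2 (Nat.factorial_ne_zero _))]
  rw [eq_mul_factorial_mul_weightedExpCoeff (a := fun l => iteratedDeriv l f x) h_rec le_rfl,
    iteratedDeriv_zero, weightedExpCoeff, mul_sum]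
  congr 1
  refine sum_congr rfl fun m _ => ?_
  rw [prod_div_distrib, mul_div_assoc', div_mul_eq_mul_div]

end LogDeriv

section SimplePoles

lemma iteratedDeriv_one_div_const_sub {𝕜 : Type*} [NontriviallyNormedField 𝕜] (n : ℕ) (a x : 𝕜) :
    iteratedDeriv n (fun z => 1 / (a - z)) x = n ! * (1 / (a - x) ^ (n + 1)) := by
  have h_exp : (-1 - n : ℤ) = -((n + 1 : ℕ) : ℤ) := by
    push_cast
    ring
  simp only [one_div]
  rw [iteratedDeriv_comp_const_sub (f := Inv.inv), iteratedDeriv_eq_iterate]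
  simp only [iter_deriv_inv]
  rw [h_exp, zpow_neg, zpow_natCast, smul_eq_mul, ← mul_assoc, ← mul_assoc, ← mul_pow,
    neg_one_mul, neg_neg, one_pow, one_mul]

lemma iteratedDeriv_const_add_sum_one_div_sub {𝕜 ι : Type*} [NontriviallyNormedField 𝕜] [Fintype ι]
    {w : ι → 𝕜} {x : 𝕜} (hx : ∀ i, x ≠ w i) (c : 𝕜) (n : ℕ) :
    iteratedDeriv n (fun z => c + ∑ l, 1 / (w l - z)) x =
      if n = 0 then c + ∑ l, 1 / (w l - x) else n ! * ∑ l, 1 / (w l - x) ^ (n + 1) := by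
  split_ifs with hn
  · rw [hn, iteratedDeriv_zero]
  · rw [iteratedDeriv_const_add (Nat.pos_of_ne_zero hn), iteratedDeriv_fun_sum, mul_sum]
    · simp only [iteratedDeriv_one_div_const_sub]
    · exact fun i _ => contDiffAt_const.div (contDiffAt_const.sub contDiffAt_id)
        (sub_ne_zero.2 (hx i).symm)

variable {ι : Type*} [Fintype ι] {w : ι → ℂ} {z : ℂ}

lemma logDeriv_cexp_div_prod_sub (hz : ∀ i, z ≠ w i) (c : ℂ) :
    logDeriv (fun z => Complex.exp (c * z) / ∏ i, (w i - z)) z = c + ∑ l, 1 / (w l - z) := by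
  have h_sub : ∀ i ∈ univ, w i - z ≠ 0 := fun i _ => sub_ne_zero.2 (hz i).symm
  have h_exp : logDeriv (fun z => Complex.exp (c * z)) z = c := by
    have h_deriv : HasDerivAt (fun z => Complex.exp (c * z)) (Complex.exp (c * z) * c) z := by
      simpa using ((hasDerivAt_id z).const_mul c).cexp
    rw [logDeriv_apply, h_deriv.deriv, mul_div_cancel_left₀ _ (Complex.exp_ne_zero _)]
  have h_prod : logDeriv (fun z => ∏ i, (w i - z)) z = -∑ l, 1 / (w l - z) := by
    rw [logDeriv_prod h_sub fun i _ => by fun_prop, ← sum_neg_distrib]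
    exact sum_congr rfl fun i _ => by simp [logDeriv_apply, neg_div]
  rw [logDeriv_div (f := fun z => Complex.exp (c * z)) z (Complex.exp_ne_zero _)
    (prod_ne_zero_iff.2 h_sub) (by fun_prop) (by fun_prop), h_exp, h_prod, sub_neg_eq_add]

lemma iteratedDeriv_logDeriv_cexp_div_prod_sub_div_factorial (hz : ∀ i, z ≠ w i) (c : ℂ) (n : ℕ) :
    iteratedDeriv n (logDeriv fun z => Complex.exp (c * z) / ∏ i, (w i - z)) z / (n + 1)! =
      if n = 0 then c + ∑ l, 1 / (w l - z)
        else (1 / (n + 1) : ℂ) * ∑ l, 1 / (w l - z) ^ (n + 1) := by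
  have h_logDeriv : logDeriv (fun z => Complex.exp (c * z) / ∏ i, (w i - z)) =ᶠ[𝓝 z]
      fun z => c + ∑ l, 1 / (w l - z) := by
    filter_upwards [Filter.eventually_all.2 fun i => eventually_ne_nhds (hz i)] with y hy
    exact logDeriv_cexp_div_prod_sub hy c
  have h_fact : (n ! : ℂ) ≠ 0 := Nat.cast_ne_zero.2 (Nat.factorial_ne_zero _)
  rw [h_logDeriv.iteratedDeriv_eq, iteratedDeriv_const_add_sum_one_div_sub hz]
  split_ifs with hn
  · simp [hn]
  · rw [Nat.factorial_succ, Nat.cast_mul, Nat.cast_succ, mul_comm (n + 1 : ℂ),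
      mul_div_mul_left _ _ h_fact, one_div_mul_eq_div]

end SimplePoles

/-- **Lemma (higher derivatives of `e^{−Nα/2}/∏(wᵢ−α)`).**
The sum runs over all tuples `(m₁,…,mₙ)` of nonnegative integers (realised as
`m : Fin n → ℕ`, with `m_j = m (j-1)`) such that `m₁ + 2m₂ + ⋯ + n·mₙ = n`.  The factor for
`j = 1` (Lean index `0`) is `(−N/2 + Σ_l 1/(w_l−α))^{m₁}`, and for `j ≥ 2` it is
`((1/j)·Σ_l 1/(w_l−α)^j)^{m_j}`. -/
theorem nth_deriv_exp_over_prod (n k : ℕ) (hk : 1 ≤ k) (N : ℂ) (w : Fin k → ℂ) (α : ℂ)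
    (hα : ∀ i, α ≠ w i) :
    iteratedDeriv n (fun z : ℂ => Complex.exp (-N * z / 2) / ∏ i, (w i - z)) α =
      (Complex.exp (-N * α / 2) / ∏ i, (w i - α)) *
        ∑ m ∈ (Fintype.piFinset fun _ : Fin n => Finset.range (n + 1)).filter
            (fun m => ∑ j : Fin n, ((j : ℕ) + 1) * m j = n),
          ((n.factorial : ℂ) / ∏ j, ((m j).factorial : ℂ)) *
            ∏ j : Fin n,
              (if (j : ℕ) = 0 then -N / 2 + ∑ l, 1 / (w l - α)
                else (1 / ((j : ℕ) + 1) : ℂ) * ∑ l, 1 / (w l - α) ^ ((j : ℕ) + 1)) ^ (m j) := by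
  have h_prod : ∏ i, (w i - α) ≠ 0 := prod_ne_zero_iff.2 fun i _ => sub_ne_zero.2 (hα i).symm
  have h_smooth : ContDiffAt ℂ n (fun z => Complex.exp (-N / 2 * z) / ∏ i, (w i - z)) α :=
    ContDiffAt.div (by fun_prop) (contDiffAt_prod fun i _ => by fun_prop) h_prod
  simp only [mul_div_right_comm (-N)]
  rw [iteratedDeriv_eq_mul_sum_logDeriv h_smooth (div_ne_zero (Complex.exp_ne_zero _) h_prod)]
  simp only [iteratedDeriv_logDeriv_cexp_div_prod_sub_div_factorial hα, weightedTuples]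
end
end

section
/- Let k ≥ 1 and n ≥ 1 be integers, let (m₁,…,mₙ) be a tuple of nonnegative integers, and let N be a complex number. Then (1/((2πi)^{k}·k!)) ∮_{|w₁|=1}⋯∮_{|w_k|=1} ( e^{N(w₁+⋯+w_k)} / ∏_{i=1}^{k} w_i^{2k} ) · Δ²(w) · ( Σ_{l=1}^{k} 1/w_l − N/2 )^{m₁} · ∏_{j=2}^{n} ( Σ_{l=1}^{k} 1/w_l^{j} )^{m_j} dw₁⋯dw_k = N^{k²+Σ_{s=1}^{n} s·m_s} · Σ (−1/2)^{m₁₀} · C(m₁; m₁₀,m₁₁,…,m₁ₖ) · ( ∏_{s=2}^{n} C(m_s; m_{s1},…,m_{sk}) ) · ( ∏_{i=1}^{k} 1/(2k + Σ_{s=1}^{n} s·m_{si} − i)! ) · ∏_{1≤i<j≤k} ( Σ_{s=1}^{n} s·m_{sj} − Σ_{s=1}^{n} s·m_{si} − j + i ), where the sum is over all nonnegative integers m₁₀, m₁₁,…,m₁ₖ with m₁₀+m₁₁+⋯+m₁ₖ = m₁ and, for each s = 2,…,n, all nonnegative integers m_{s1},…,m_{sk} with m_{s1}+⋯+m_{sk}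 = m_s. -/
open Finset

noncomputable section

/-- The iterated contour integral `∮_{|w₁|=1} ⋯ ∮_{|w_n|=1} f(w₁,…,w_n) dw_n ⋯ dw₁`,
each circle positively oriented. -/
def multiCircle : (n : ℕ) → ((Fin n → ℂ) → ℂ) → ℂ
  | 0, f => f ![]
  | n + 1, f => circleIntegral (fun w => multiCircle n (fun v => f (Fin.cons w v))) 0 1

/-!
The product of `Δ(w)` with a symmetric function `P(w) = ∑ₜ cₜ ∏ᵢ wᵢ^(-aₜᵢ)` is alternating, and
permuting the variables in each summand of `Δ(w)` turns it into `∑ₜ cₜ det (wⱼ^(i - aₜᵢ))`.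
Multiplying by the second factor `Δ(w)` and integrating, Andréief's identity
`∮ det (φᵢ(wⱼ)) det (ψᵢ(wⱼ)) dw = k! det (∮ φᵢ ψⱼ)` leaves the determinants of the one-dimensional
integrals `∮ e^(Nz) z^(j - xᵢ - 1) dz = 2πi N^(xᵢ - j) / (xᵢ - j)!` with `xᵢ = 2k + aₜᵢ - i - 1`,
`i` and `j` counted from `0`.  After the powers of `N` are pulled out, multiplying row `i` by `xᵢ!`
gives the falling factorials of `xᵢ`, hence a Vandermonde determinant in the `xᵢ`.
-/

section Determinants

variable {n R : Type*} [Fintype n] [DecidableEq n] [CommRing R]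

theorem sum_sum_sign_mul_sign_mul_prod (M : Matrix n n R) :
    ∑ σ : Equiv.Perm n, ∑ τ : Equiv.Perm n,
        ((σ.sign : ℤ) : R) * ((τ.sign : ℤ) : R) * ∏ i, M (σ i) (τ i) =
      (Fintype.card n).factorial * M.det := by
  have inner (σ : Equiv.Perm n) :
      ∑ τ : Equiv.Perm n, ((σ.sign : ℤ) : R) * ((τ.sign : ℤ) : R) * ∏ i, M (σ i) (τ i) =
        M.det := calc
    _ = ((σ.sign : ℤ) : R) * (M.submatrix σ id).transpose.det := by
      simp only [Matrix.det_apply', Matrix.transpose_apply, Matrix.submatrix_apply, id_eq,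
        mul_sum, mul_assoc]
    _ = M.det := by
      rw [Matrix.det_transpose, Matrix.det_permute, ← mul_assoc, ← Int.cast_mul,
        Int.units_coe_mul_self, Int.cast_one, one_mul]
  simp only [inner, sum_const, card_univ, Fintype.card_perm, nsmul_eq_mul]

theorem det_mul_eq_sum_mul_det {ι : Type*} (s : Finset ι) (c : ι → R) (A : Matrix n n R)
    (B : ι → Matrix n n R) (p : R)
    (hp : ∀ σ : Equiv.Perm n, p = ∑ t ∈ s, c t * ∏ i, B t (σ i) i) :
    A.det * p = ∑ t ∈ s, c t * (Matrix.of fun i j => A i j * B t i j).det := by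
  simp only [Matrix.det_apply', Matrix.of_apply, mul_sum, sum_mul]
  rw [sum_comm]
  refine sum_congr rfl fun σ _ => ?_
  rw [hp σ, mul_sum]
  refine sum_congr rfl fun t _ => ?_
  rw [prod_mul_distrib]
  ring

theorem det_pow_tsub_mul (N : R) (x y : n → ℕ) (hxy : ∀ i j, y j ≤ x i) (A : Matrix n n R) :
    (Matrix.of fun i j => N ^ (x i - y j) * A i j).det = N ^ (∑ i, x i - ∑ i, y i) * A.det := by
  simp only [Matrix.det_apply', Matrix.of_apply, prod_mul_distrib, prod_pow_eq_pow_sum, mul_sum]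
  refine sum_congr rfl fun σ _ => ?_
  rw [sum_tsub_distrib univ fun i _ => hxy (σ i) i, Equiv.sum_comp σ x]
  ring

theorem det_vandermonde_eq_prod_filter {k : ℕ} (v : Fin k → R) :
    (Matrix.vandermonde v).det = ∏ p : Fin k × Fin k with p.1 < p.2, (v p.2 - v p.1) := by
  rw [Matrix.det_vandermonde]
  exact (prod_finset_product' _ _ _ (by simp)).symm

theorem prod_sub_sq_eq_det_vandermonde_sq {k : ℕ} (v : Fin k → R) :
    (∏ p : Fin k × Fin k with p.1 < p.2, (v p.1 - v p.2)) ^ 2 =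
      (Matrix.vandermonde v).det ^ 2 := by
  simp only [det_vandermonde_eq_prod_filter, ← prod_pow, sub_sq_comm]

theorem det_one_div_factorial_tsub {K : Type*} [Field K] [CharZero K] {k : ℕ} (x : Fin k → ℕ)
    (hx : ∀ i j : Fin k, (j : ℕ) ≤ x i) :
    (Matrix.of fun i j : Fin k => 1 / ((x i - j).factorial : K)).det =
      (∏ i, 1 / ((x i).factorial : K)) *
        ∏ p : Fin k × Fin k with p.1 < p.2, ((x p.2 : K) - x p.1) := by
  have entry (i j : Fin k) : 1 / ((x i - j).factorial : K) =
      1 / ((x i).factorial : K) * (descPochhammer K j).eval (x i : K) := by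
    rw [descPochhammer_eval_eq_descFactorial, ← Nat.factorial_mul_descFactorial (hx i j)]
    have hfact : ((x i - j).factorial : K) ≠ 0 := Nat.cast_ne_zero.mpr (Nat.factorial_ne_zero _)
    have hdesc : ((x i).descFactorial j : K) ≠ 0 :=
      Nat.cast_ne_zero.mpr (Nat.descFactorial_eq_zero_iff_lt.not.mpr (hx i j).not_gt)
    push_cast
    field_simp
  simp only [entry]
  refine (Matrix.det_mul_column (fun i => 1 / ((x i).factorial : K))
    (Matrix.of fun i j : Fin k => (descPochhammer K j).eval (x i : K))).trans ?_
  rw [← det_vandermonde_eq_prod_filter fun i => (x i : K),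
    Matrix.det_eval_matrixOfPolynomials_eq_det_vandermonde _ (fun j : Fin k => descPochhammer K j)
      (fun j => descPochhammer_natDegree K j) fun j => monic_descPochhammer K j]

end Determinants

section MultinomialExpansion

theorem piFinset_range_filter_sum_eq {ι : Type*} [Fintype ι] [DecidableEq ι] (m : ℕ) :
    {g ∈ Fintype.piFinset fun _ : ι => range (m + 1) | ∑ i, g i = m} = piAntidiag univ m := by
  ext g
  simp only [mem_filter, Fintype.mem_piFinset, mem_range, mem_piAntidiag, mem_univ,
    implies_true, and_true, and_iff_right_iff_imp]
  rintro rfl i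
  exact Nat.lt_succ_of_le (single_le_sum (fun _ _ => Nat.zero_le _) (mem_univ i))

theorem piFinset_piFinset_range_filter_sum_eq {κ ι : Type*} [Fintype κ] [DecidableEq κ]
    [Fintype ι] [DecidableEq ι] (r : κ → ℕ)
    [DecidablePred fun M : κ → ι → ℕ => ∀ j, ∑ i, M j i = r j] :
    {M ∈ Fintype.piFinset fun j => Fintype.piFinset fun _ : ι => range (r j + 1) |
        ∀ j, ∑ i, M j i = r j} = Fintype.piFinset fun j => piAntidiag univ (r j) := by
  ext M
  simp only [← piFinset_range_filter_sum_eq, mem_filter, Fintype.mem_piFinset, forall_and]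

variable {κ : Type*} [Fintype κ] {k : ℕ}

/-- The exponent of the variable `zᵢ` in the monomial of `(x + ∑ z)^m * ∏ⱼ (∑ z ^ dⱼ)^(rⱼ)` which
takes `g 0` factors `x` and `g i.succ` factors `zᵢ` from the first power and `M j i` factors
`zᵢ ^ dⱼ` from the `j`-th power sum.  For `dⱼ = j + 2` it is the paper's `∑ₛ s m_{si}`. -/
def monomialExponent (d : κ → ℕ) (g : Fin (k + 1) → ℕ) (M : κ → Fin k → ℕ) (i : Fin k) : ℕ :=
  g i.succ + ∑ j, d j * M j i

theorem add_sum_pow_mul_prod_sum_pow [DecidableEq κ] {R : Type*} [CommSemiring R] (x : R)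
    (z : Fin k → R) (m : ℕ) (d r : κ → ℕ) :
    (x + ∑ i, z i) ^ m * ∏ j, (∑ i, z i ^ d j) ^ r j =
      ∑ t ∈ piAntidiag univ m ×ˢ Fintype.piFinset fun j => piAntidiag univ (r j),
        x ^ t.1 0 * Nat.multinomial univ t.1 * (∏ j, (Nat.multinomial univ (t.2 j) : R)) *
          ∏ i, z i ^ monomialExponent d t.1 t.2 i := by
  have hcons : x + ∑ i, z i = ∑ i, (Fin.cons x z : Fin (k + 1) → R) i := by
    simp only [Fin.sum_univ_succ, Fin.cons_zero, Fin.cons_succ]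
  simp only [hcons, sum_pow_eq_sum_piAntidiag]
  rw [prod_univ_sum, sum_mul_sum, sum_product]
  refine sum_congr rfl fun g _ => sum_congr rfl fun M _ => ?_
  simp only [monomialExponent, pow_add, ← prod_pow_eq_pow_sum, pow_mul, prod_mul_distrib,
    Fin.prod_univ_succ, Fin.cons_zero, Fin.cons_succ]
  rw [prod_comm]
  ring

theorem add_sum_monomialExponent {d r : κ → ℕ} {m : ℕ} {g : Fin (k + 1) → ℕ}
    {M : κ → Fin k → ℕ} (hg : ∑ i, g i = m) (hM : ∀ j, ∑ i, M j i = r j) :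
    g 0 + ∑ i, monomialExponent d g M i = m + ∑ j, d j * r j := by
  simp only [monomialExponent, sum_add_distrib]
  rw [sum_comm, ← add_assoc, ← Fin.sum_univ_succ, hg]
  simp only [← mul_sum, hM]

end MultinomialExpansion

section MultiCircle

theorem multiCircle_congr : ∀ {k : ℕ} {f g : (Fin k → ℂ) → ℂ},
    (∀ w, (∀ i, ‖w i‖ = 1) → f w = g w) → multiCircle k f = multiCircle k g
  | 0, _, _, h => h _ fun i => i.elim0
  | _ + 1, _, _, h =>
    circleIntegral.integral_congr zero_le_one fun _ hz => multiCircle_congr fun _ hv =>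
      h _ (Fin.cases (mem_sphere_zero_iff_norm.mp hz) hv)

theorem multiCircle_sum_mul_prod {ι : Type*} (s : Finset ι) :
    ∀ {k : ℕ} (c : ι → ℂ) (f : ι → Fin k → ℂ → ℂ),
      (∀ t ∈ s, ∀ i, CircleIntegrable (f t i) 0 1) →
      multiCircle k (fun w => ∑ t ∈ s, c t * ∏ i, f t i (w i)) =
        ∑ t ∈ s, c t * ∏ i, ∮ z in C(0, 1), f t i z
  | 0, c, f, _ => by simp only [multiCircle, univ_eq_empty, prod_empty]
  | k + 1, c, f, hf => by
    have integrate_tail (z : ℂ) :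
        multiCircle k (fun v => ∑ t ∈ s, c t * ∏ i, f t i ((Fin.cons z v : Fin (k + 1) → ℂ) i)) =
          ∑ t ∈ s, (c t * ∏ i : Fin k, ∮ y in C(0, 1), f t i.succ y) * f t 0 z := by
      simp only [Fin.prod_univ_succ, Fin.cons_zero, Fin.cons_succ, ← mul_assoc]
      rw [multiCircle_sum_mul_prod s (fun t => c t * f t 0 z) (fun t i => f t i.succ)
        fun t ht i => hf t ht i.succ]
      simp only [mul_right_comm]
    simp only [multiCircle, integrate_tail]
    refine (circleIntegral.integral_fun_sum fun t ht => (hf t ht 0).const_fun_smul).trans ?_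
    simp only [smul_eq_mul, circleIntegral.integral_const_mul, Fin.prod_univ_succ, mul_assoc,
      mul_comm (∮ z in C(0, 1), f _ 0 z)]

theorem multiCircle_sum_det_mul_det {ι : Type*} {k : ℕ} (s : Finset ι) (c : ι → ℂ)
    (φ ψ : ι → Fin k → ℂ → ℂ)
    (hφψ : ∀ t ∈ s, ∀ i j, CircleIntegrable (fun z => φ t i z * ψ t j z) 0 1) :
    multiCircle k (fun w => ∑ t ∈ s, c t *
        ((Matrix.of fun i j => φ t i (w j)).det * (Matrix.of fun i j => ψ t i (w j)).det)) =
      k.factorial * ∑ t ∈ s, c t *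
        (Matrix.of fun i j => ∮ z in C(0, 1), φ t i z * ψ t j z).det := by
  have leibniz (w : Fin k → ℂ) : ∑ t ∈ s, c t *
      ((Matrix.of fun i j => φ t i (w j)).det * (Matrix.of fun i j => ψ t i (w j)).det) =
        ∑ q ∈ s ×ˢ (univ : Finset (Equiv.Perm (Fin k) × Equiv.Perm (Fin k))),
          (c q.1 * (((q.2.1.sign : ℤ) : ℂ) * ((q.2.2.sign : ℤ) : ℂ))) *
            ∏ i, (φ q.1 (q.2.1 i) (w i) * ψ q.1 (q.2.2 i) (w i)) := by
    rw [sum_product]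
    refine sum_congr rfl fun t _ => ?_
    simp only [Matrix.det_apply', Matrix.of_apply]
    rw [sum_mul_sum, mul_sum, Fintype.sum_prod_type]
    refine sum_congr rfl fun σ _ => ?_
    rw [mul_sum]
    refine sum_congr rfl fun τ _ => ?_
    rw [prod_mul_distrib]
    ring
  simp only [leibniz]
  rw [multiCircle_sum_mul_prod _ _
    (fun (q : ι × Equiv.Perm (Fin k) × Equiv.Perm (Fin k)) i z =>
      φ q.1 (q.2.1 i) z * ψ q.1 (q.2.2 i) z)
    fun q hq i => hφψ q.1 (mem_product.mp hq).1 (q.2.1 i) (q.2.2 i), sum_product, mul_sum]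
  refine sum_congr rfl fun t _ => ?_
  have hdet := sum_sum_sign_mul_sign_mul_prod
    (Matrix.of fun i j => ∮ z in C(0, 1), φ t i z * ψ t j z)
  rw [Fintype.card_fin] at hdet
  simp only [Matrix.of_apply] at hdet
  rw [mul_left_comm, ← hdet]
  simp only [Fintype.sum_prod_type, mul_sum, mul_assoc]

end MultiCircle

section ExponentialIntegrals

variable {k : ℕ}

theorem circleIntegral_exp_const_mul_div_pow (N : ℂ) (e : ℕ) :
    (∮ z in C(0, 1), Complex.exp (N * z) / z ^ (e + 1)) =
      2 * (Real.pi : ℂ) * Complex.I * (N ^ e / e.factorial) := by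
  have hd : Differentiable ℂ fun z : ℂ => Complex.exp (N * z) := by fun_prop
  have cauchy := (hd.diffContOnCl (s := Metric.ball 0 1)).circleIntegral_one_div_sub_center_pow_smul
    one_pos e
  rw [iteratedDeriv_cexp_const_mul] at cauchy
  simp only [sub_zero, smul_eq_mul, mul_zero, Complex.exp_zero, mul_one,
    one_div_mul_eq_div] at cauchy
  rw [cauchy]
  ring

theorem circleIntegrable_exp_const_mul_div_pow_mul_pow (N : ℂ) (e j : ℕ) :
    CircleIntegrable (fun z => Complex.exp (N * z) / z ^ e * z ^ j) 0 1 := by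
  refine ContinuousOn.circleIntegrable zero_le_one fun z hz => ContinuousAt.continuousWithinAt ?_
  have hz0 : z ^ e ≠ 0 := pow_ne_zero e (Metric.ne_of_mem_sphere hz one_ne_zero)
  fun_prop (disch := assumption)

theorem det_circleIntegral_exp_const_mul_div_pow_mul_pow (N : ℂ) (x : Fin k → ℕ)
    (hx : ∀ i j : Fin k, (j : ℕ) ≤ x i) :
    (Matrix.of fun i j : Fin k =>
        ∮ z in C(0, 1), Complex.exp (N * z) / z ^ (x i + 1) * z ^ (j : ℕ)).det =
      (2 * (Real.pi : ℂ) * Complex.I) ^ k * (N ^ (∑ i, x i - ∑ i : Fin k, (i : ℕ)) *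
        ((∏ i, 1 / ((x i).factorial : ℂ)) *
          ∏ p : Fin k × Fin k with p.1 < p.2, ((x p.2 : ℂ) - x p.1))) := by
  have entry (i j : Fin k) :
      (∮ z in C(0, 1), Complex.exp (N * z) / z ^ (x i + 1) * z ^ (j : ℕ)) =
        2 * (Real.pi : ℂ) * Complex.I * (N ^ (x i - j) * (1 / ((x i - j).factorial : ℂ))) := by
    rw [mul_one_div, ← circleIntegral_exp_const_mul_div_pow]
    refine circleIntegral.integral_congr zero_le_one fun z hz => ?_
    have hz0 : z ≠ 0 := Metric.ne_of_mem_sphere hz one_ne_zero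
    have hsplit : x i + 1 = (x i - j + 1) + j := by have := hx i j; omega
    simp only [hsplit, pow_add]
    field_simp
  simp only [entry]
  rw [← det_one_div_factorial_tsub x hx, ← det_pow_tsub_mul N x _ hx]
  exact (Matrix.det_smul (Matrix.of _) _).trans (by simp only [Fintype.card_fin]; rfl)

theorem exp_div_mul_vandermonde_sq_mul_eq_sum {ι : Type*} (s : Finset ι) (c : ι → ℂ)
    (a : ι → Fin k → ℕ) (N p : ℂ) {w : Fin k → ℂ} (hw : ∀ i, w i ≠ 0)
    (hp : ∀ σ : Equiv.Perm (Fin k), p = ∑ t ∈ s, c t * ∏ i, (w i)⁻¹ ^ a t (σ i)) :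
    Complex.exp (N * ∑ i, w i) / (∏ i, w i ^ (2 * k)) * (Matrix.vandermonde w).det ^ 2 * p =
      ∑ t ∈ s, c t *
        ((Matrix.of fun i j : Fin k =>
            Complex.exp (N * w j) / w j ^ (2 * k + a t i - (i + 1) + 1)).det *
          (Matrix.of fun i j : Fin k => w j ^ (i : ℕ)).det) := by
  have entry (t : ι) (i j : Fin k) :
      Complex.exp (N * w j) / w j ^ (2 * k + a t i - (i + 1) + 1) =
        Complex.exp (N * w j) / w j ^ (2 * k) * (w j ^ (i : ℕ) * (w j)⁻¹ ^ a t i) := by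
    have hsplit : w j ^ (2 * k + a t i - (i + 1) + 1) * w j ^ (i : ℕ) =
        w j ^ (2 * k) * w j ^ a t i := by
      rw [← pow_add, ← pow_add]
      congr 1
      omega
    have := hw j
    rw [inv_pow]
    field_simp
    linear_combination -hsplit
  have hprod : ∏ j, (Complex.exp (N * w j) / w j ^ (2 * k)) =
      Complex.exp (N * ∑ i, w i) / ∏ i, w i ^ (2 * k) := by
    rw [prod_div_distrib, ← Complex.exp_sum, mul_sum]
  have hrow (t : ι) := Matrix.det_mul_row (fun j => Complex.exp (N * w j) / w j ^ (2 * k))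
    (Matrix.of fun i j : Fin k => w j ^ (i : ℕ) * (w j)⁻¹ ^ a t i)
  have hvand : (Matrix.of fun i j : Fin k => w j ^ (i : ℕ)).det = (Matrix.vandermonde w).det :=
    Matrix.det_transpose (Matrix.vandermonde w)
  have alternant := det_mul_eq_sum_mul_det s c (Matrix.of fun i j : Fin k => w j ^ (i : ℕ))
    (fun t => Matrix.of fun i j => (w j)⁻¹ ^ a t i) p hp
  simp only [Matrix.of_apply] at hrow alternant
  simp only [entry, hrow, hprod]
  rw [hvand] at alternant ⊢
  rw [sq, mul_assoc, mul_assoc, alternant, mul_sum s, mul_sum s]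
  refine sum_congr rfl fun t _ => ?_
  ring

theorem sum_two_mul_add_tsub_eq (a : Fin k → ℕ) :
    ∑ i : Fin k, (2 * k + a i - (i + 1)) - ∑ i : Fin k, (i : ℕ) = k ^ 2 + ∑ i, a i := by
  have hgauss : (∑ i : Fin k, (i : ℕ)) * 2 + k = k ^ 2 := by
    rw [Fin.sum_univ_eq_sum_range fun i => i, sum_range_id_mul_two]
    cases k <;> simp [Nat.pow_two, Nat.mul_succ, Nat.succ_mul]
  have hsum : ∑ i : Fin k, (2 * k + a i - (i + 1)) + ∑ i : Fin k, (i : ℕ) + k =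
      2 * k ^ 2 + ∑ i, a i := calc
    _ = ∑ i : Fin k, (2 * k + a i - (i + 1) + i + 1) := by
      simp only [sum_add_distrib, sum_const, card_univ, Fintype.card_fin, smul_eq_mul, mul_one]
    _ = ∑ i : Fin k, (2 * k + a i) := sum_congr rfl fun i _ => by omega
    _ = 2 * k ^ 2 + ∑ i, a i := by
      simp only [sum_add_distrib, sum_const, card_univ, Fintype.card_fin, smul_eq_mul]
      ring
  omega

theorem normalized_multiCircle_exp_div_mul_vandermonde_sq_mul {ι : Type*} (s : Finset ι)
    (c : ι → ℂ) (a : ι → Fin k → ℕ) (N : ℂ) (P : (Fin k → ℂ) → ℂ)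
    (hsymm : ∀ (w : Fin k → ℂ) (σ : Equiv.Perm (Fin k)), P (w ∘ σ) = P w)
    (hP : ∀ w, P w = ∑ t ∈ s, c t * ∏ i, (w i)⁻¹ ^ a t i) :
    ((2 * (Real.pi : ℂ) * Complex.I) ^ k * (k.factorial : ℂ))⁻¹ *
        multiCircle k (fun w => Complex.exp (N * ∑ i, w i) / (∏ i, w i ^ (2 * k)) *
          (Matrix.vandermonde w).det ^ 2 * P w) =
      ∑ t ∈ s, c t * (N ^ (k ^ 2 + ∑ i, a t i) *
        ((∏ i : Fin k, 1 / ((2 * k + a t i - (i + 1)).factorial : ℂ)) *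
          ∏ p : Fin k × Fin k with p.1 < p.2,
            ((a t p.2 : ℂ) - a t p.1 - (p.2 : ℕ) + (p.1 : ℕ)))) := by
  have hperm (w : Fin k → ℂ) (σ : Equiv.Perm (Fin k)) :
      P w = ∑ t ∈ s, c t * ∏ i, (w i)⁻¹ ^ a t (σ i) := by
    rw [← hsymm w σ.symm, hP]
    refine sum_congr rfl fun t _ => ?_
    rw [← Equiv.prod_comp σ]
    simp only [Function.comp_apply, Equiv.symm_apply_apply]
  have hdiff (t : ι) (i j : Fin k) :
      ((2 * k + a t j - (j + 1) : ℕ) : ℂ) - ((2 * k + a t i - (i + 1) : ℕ) : ℂ) =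
        (a t j : ℂ) - a t i - (j : ℕ) + (i : ℕ) := by
    rw [Nat.cast_sub (by omega), Nat.cast_sub (by omega)]
    push_cast
    ring
  rw [multiCircle_congr fun w hw => exp_div_mul_vandermonde_sq_mul_eq_sum s c a N (P w)
      (fun i => norm_ne_zero_iff.mp (by simp only [hw i, ne_eq, one_ne_zero, not_false_eq_true]))
      (hperm w),
    multiCircle_sum_det_mul_det s c
      (fun t i z => Complex.exp (N * z) / z ^ (2 * k + a t i - (i + 1) + 1))
      (fun _ i z => z ^ (i : ℕ))
      fun t _ i j => circleIntegrable_exp_const_mul_div_pow_mul_pow N _ j,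
    inv_mul_eq_iff_eq_mul₀ (mul_ne_zero (pow_ne_zero k Complex.two_pi_I_ne_zero)
      (Nat.cast_ne_zero.mpr k.factorial_ne_zero)),
    mul_comm (_ ^ k), mul_assoc, mul_sum _ _ (_ ^ k)]
  congr 1
  refine sum_congr rfl fun t _ => ?_
  rw [det_circleIntegral_exp_const_mul_div_pow_mul_pow N (fun i => 2 * k + a t i - (i + 1))
    fun i j => by omega, sum_two_mul_add_tsub_eq, mul_left_comm]
  simp only [hdiff]

theorem normalized_multiCircle_exp_div_mul_vandermonde_sq_mul_powerSums {κ : Type*} [Fintype κ]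
    [DecidableEq κ] (N x : ℂ) (m : ℕ) (d r : κ → ℕ) :
    ((2 * (Real.pi : ℂ) * Complex.I) ^ k * (k.factorial : ℂ))⁻¹ *
        multiCircle k (fun w => Complex.exp (N * ∑ i, w i) / (∏ i, w i ^ (2 * k)) *
          (Matrix.vandermonde w).det ^ 2 *
          ((x + ∑ l, (w l)⁻¹) ^ m * ∏ j, (∑ l, (w l)⁻¹ ^ d j) ^ r j)) =
      ∑ g ∈ piAntidiag univ m, ∑ M ∈ Fintype.piFinset fun j => piAntidiag univ (r j),
        x ^ g 0 * Nat.multinomial univ g * (∏ j, (Nat.multinomial univ (M j) : ℂ)) *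
          (N ^ (k ^ 2 + ∑ i, monomialExponent d g M i) *
            ((∏ i : Fin k,
                1 / ((2 * k + monomialExponent d g M i - (i + 1)).factorial : ℂ)) *
              ∏ p : Fin k × Fin k with p.1 < p.2,
                ((monomialExponent d g M p.2 : ℂ) - monomialExponent d g M p.1 -
                  (p.2 : ℕ) + (p.1 : ℕ)))) := by
  have hsymm (w : Fin k → ℂ) (σ : Equiv.Perm (Fin k)) (e : ℕ) :
      ∑ l, (w (σ l))⁻¹ ^ e = ∑ l, (w l)⁻¹ ^ e := Equiv.sum_comp σ fun l => (w l)⁻¹ ^ e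
  have hsymm_one (w : Fin k → ℂ) (σ : Equiv.Perm (Fin k)) :
      ∑ l, (w (σ l))⁻¹ = ∑ l, (w l)⁻¹ := Equiv.sum_comp σ fun l => (w l)⁻¹
  rw [normalized_multiCircle_exp_div_mul_vandermonde_sq_mul _ _ _ N _
    (fun w σ => by simp only [Function.comp_apply, hsymm, hsymm_one])
    fun w => add_sum_pow_mul_prod_sum_pow x (fun i => (w i)⁻¹) m d r, sum_product]

end ExponentialIntegrals

/-- **Proposition (the `k`-fold contour integral with `(Σ1/w_l − N/2)^{m₁}`).**
Here `n = nn + 1 ≥ 1` and the tuple `(m₁,…,mₙ)` is encoded by `m1 : ℕ` (for `m₁`) and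
`mr : Fin nn → ℕ` (with `m_(j+2) = mr j`); `Δ²(w) = (∏_{i<j}(wᵢ−w_j))²`.  On the right,
`g : Fin (k+1) → ℕ` encodes `(m₁₀,m₁₁,…,m₁ₖ)` with `Σ g = m₁` and, for each `s = j+2`,
`Mm j : Fin k → ℕ` encodes `(m_{s1},…,m_{sk})` with sum `m_s`; the quantity
`Σ_{s=1}^n s·m_{si}` is `g i.succ + Σ_j (j+2)·Mm j i`, and `−j+i` (1-based) equals
`−(p.2)+p.1` (0-based). -/
theorem contour_integral_prop_half (k nn : ℕ) (hk : 1 ≤ k) (m1 : ℕ) (mr : Fin nn → ℕ)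
    (N : ℂ) :
    ((2 * (Real.pi : ℂ) * Complex.I) ^ k * (k.factorial : ℂ))⁻¹ *
        multiCircle k (fun w =>
          Complex.exp (N * ∑ i, w i) / (∏ i, w i ^ (2 * k)) *
            (∏ p ∈ Finset.univ.filter (fun p : Fin k × Fin k => p.1 < p.2),
              (w p.1 - w p.2)) ^ 2 *
            ((∑ l, 1 / w l) - N / 2) ^ m1 *
            ∏ j : Fin nn, (∑ l, 1 / w l ^ ((j : ℕ) + 2)) ^ (mr j)) =
      N ^ (k ^ 2 + m1 + ∑ j : Fin nn, ((j : ℕ) + 2) * mr j) *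
        ∑ g ∈ (Fintype.piFinset fun _ : Fin (k + 1) => Finset.range (m1 + 1)).filter
            (fun g => ∑ i, g i = m1),
          ∑ Mm ∈ (Fintype.piFinset fun j : Fin nn => Fintype.piFinset fun _ : Fin k =>
                Finset.range (mr j + 1)).filter (fun Mm => ∀ j, ∑ i, Mm j i = mr j),
            (-(1 : ℂ) / 2) ^ (g 0) * (Nat.multinomial Finset.univ g : ℂ) *
              (∏ j, (Nat.multinomial Finset.univ (Mm j) : ℂ)) *
              (∏ i : Fin k, (1 : ℂ) /
                (((2 * k + (g i.succ + ∑ j : Fin nn, ((j : ℕ) + 2) * Mm j i)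
                    - ((i : ℕ) + 1)).factorial : ℂ))) *
              ∏ p ∈ Finset.univ.filter (fun p : Fin k × Fin k => p.1 < p.2),
                ((((g p.2.succ + ∑ j : Fin nn, ((j : ℕ) + 2) * Mm j p.2 : ℕ) : ℤ)
                    - ((g p.1.succ + ∑ j : Fin nn, ((j : ℕ) + 2) * Mm j p.1 : ℕ) : ℤ)
                    - ((p.2 : ℕ) : ℤ) + ((p.1 : ℕ) : ℤ) : ℤ) : ℂ) := by
  have normalized := normalized_multiCircle_exp_div_mul_vandermonde_sq_mul_powerSums (k := k) N
    (-N / 2) m1 (fun j : Fin nn => (j : ℕ) + 2) mr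
  simp only [neg_div, neg_add_eq_sub, inv_pow, one_div] at normalized
  simp only [one_div, prod_sub_sq_eq_det_vandermonde_sq, mul_assoc (_ / _ * _ ^ 2 : ℂ),
    piFinset_range_filter_sum_eq, piFinset_piFinset_range_filter_sum_eq]
  rw [normalized, mul_sum]
  refine sum_congr rfl fun g hg => ?_
  rw [mul_sum]
  refine sum_congr rfl fun M hM => ?_
  have hdegree := add_sum_monomialExponent (d := fun j : Fin nn => (j : ℕ) + 2)
    (mem_piAntidiag.mp hg).1 fun j => (mem_piAntidiag.mp (Fintype.mem_piFinset.mp hM j)).1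
  have hpow : (-(N / 2)) ^ g 0 *
      N ^ (k ^ 2 + ∑ i, monomialExponent (fun j : Fin nn => (j : ℕ) + 2) g M i) =
        N ^ (k ^ 2 + m1 + ∑ j : Fin nn, ((j : ℕ) + 2) * mr j) * (-1 / 2) ^ g 0 := by
    rw [add_assoc, ← hdegree, add_left_comm, pow_add N (g 0), mul_right_comm, ← mul_pow]
    ring
  rw [mul_assoc (_ ^ g 0), mul_mul_mul_comm, hpow]
  simp only [monomialExponent, Int.cast_add, Int.cast_sub, Int.cast_natCast]
  ring
end
end
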